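/- arXiv:2302.01425 — 2 statements merged into one kernel-verified Lean document; each statement's English description precedes it below -/
import Mathlib

section
/- Let n ≥ 1, let r : ℝ → ℝ be convex with Fenchel conjugate r*(t) = sup_s (st − r(s)) finite for all t ∈ ℝ, and set R*(z) := Σ_{i=1}^n r*(zᵢ) for z ∈ ℝⁿ. Let w ∈ ℝⁿ with w₁ ≥ … ≥ wₙ, let x ∈ ℝⁿ, let σ be a permutation with x_{σ(1)} ≥ … ≥ x_{σ(n)}, and set s := (x_{σ(1)},…,x_{σ(n)}). Define f(u, w) := Σ_{i=1}^n wᵢ u_[i]. If v* minimizes v ↦ R*(s − v) + ⟨w, v⟩ over the monotone cone {v ∈ ℝⁿ : v₁ ≥ … ≥ vₙ}, then the vector u* ∈ ℝⁿ defined by u*_{σ(i)} = v*ᵢ minimizes u ↦ R*(x − u) + f(u, w) over all of ℝⁿ, and the two minimum values are equal. -/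
/-!
The key fact is an exchange inequality: for convex `φ` and a monotone `a`, the sum
`∑ φ (aᵢ - gᵢ)` does not increase when an inverted pair of entries of `g` is swapped, because the
swap replaces the two arguments by two numbers with the same sum lying between them. Bubble sorting
`g` therefore gives `∑ φ (aᵢ - g_(i)) ≤ ∑ φ (aᵢ - gᵢ)`, where `g_(i)` is the sorted tuple.

The conjugate `r*` is convex, being a supremum of affine functions, so sorting an arbitrary `u`
compatibly with `x` does not increase `R*(x - u)`, and leaves `f(u, w)` unchanged. The sorted vector
lies in the monotone cone, where `v*` is optimal; and the objective at `u*` is the isotonic objective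
at `v*` by reindexing along `σ`.
-/

/-- `sortDesc g i` is the `i`-th largest value (0-indexed) among the coordinates of `g`. -/
noncomputable def sortDesc {n : ℕ} (g : Fin n → ℝ) : Fin n → ℝ :=
  fun i => g (Tuple.sort g (Fin.rev i))

/-- The real-valued conjugate `r*` is a pointwise supremum of affine functions, hence convex. -/
theorem convexOn_conjugate {r rstar : ℝ → ℝ}
    (hrstar : ∀ t : ℝ, IsLUB (Set.range fun s => s * t - r s) (rstar t)) :
    ConvexOn ℝ Set.univ rstar := by
  refine ⟨convex_univ, fun p _ q _ a b ha hb hab => (hrstar _).2 ?_⟩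
  rintro _ ⟨s, rfl⟩
  have hp : s * p - r s ≤ rstar p := (hrstar p).1 ⟨s, rfl⟩
  have hq : s * q - r s ≤ rstar q := (hrstar q).1 ⟨s, rfl⟩
  have h1 := mul_le_mul_of_nonneg_left hp ha
  have h2 := mul_le_mul_of_nonneg_left hq hb
  have h3 : (a + b) * r s = r s := by rw [hab, one_mul]
  simp only [smul_eq_mul]
  linarith

/-- Moving two points toward each other while keeping their sum does not increase the sum of the
values of a convex function. -/
theorem convex_exchange {φ : ℝ → ℝ} (hφ : ConvexOn ℝ Set.univ φ) {a a' b b' : ℝ}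
    (ha : a ≤ a') (hb : b < b') :
    φ (a - b) + φ (a' - b') ≤ φ (a - b') + φ (a' - b) := by
  have hd : 0 < (a' - a) + (b' - b) := by linarith
  -- `a - b` and `a' - b'` are the convex combinations of `a - b'` and `a' - b` with weights
  -- `(α, β)` and `(β, α)`.
  obtain ⟨α, hα⟩ : ∃ α, α = (a' - a) / ((a' - a) + (b' - b)) := ⟨_, rfl⟩
  obtain ⟨β, hβ⟩ : ∃ β, β = (b' - b) / ((a' - a) + (b' - b)) := ⟨_, rfl⟩
  have hα0 : 0 ≤ α := hα ▸ div_nonneg (by linarith) hd.le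
  have hβ0 : 0 ≤ β := hβ ▸ div_nonneg (by linarith) hd.le
  have hs : α + β = 1 := by rw [hα, hβ, ← add_div, div_self hd.ne']
  have h1 := hφ.2 (Set.mem_univ (a - b')) (Set.mem_univ (a' - b)) hα0 hβ0 hs
  have h2 := hφ.2 (Set.mem_univ (a - b')) (Set.mem_univ (a' - b)) hβ0 hα0 (by linarith)
  have e1 : α • (a - b') + β • (a' - b) = a - b := by
    rw [hα, hβ, smul_eq_mul, smul_eq_mul]; field_simp; ring
  have e2 : β • (a - b') + α • (a' - b) = a' - b' := by
    rw [hα, hβ, smul_eq_mul, smul_eq_mul]; field_simp; ring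
  rw [e1] at h1
  rw [e2] at h2
  simp only [smul_eq_mul] at h1 h2
  have h3 : β = 1 - α := by linarith
  subst h3
  linarith

/-- Sorting `g` in the order of `a` does not increase `∑ φ (aᵢ - gᵢ)`. -/
theorem sum_convex_sub_sort_le {n : ℕ} {φ : ℝ → ℝ} (hφ : ConvexOn ℝ Set.univ φ)
    {a : Fin n → ℝ} (ha : Monotone a) (g : Fin n → ℝ) :
    ∑ i, φ (a i - (g ∘ Tuple.sort g) i) ≤ ∑ i, φ (a i - g i) := by
  refine Tuple.bubble_sort_induction
    (P := fun h => ∑ i, φ (a i - h i) ≤ ∑ i, φ (a i - g i)) le_rfl ?_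
  intro h i j hij hlt hP
  refine le_trans ?_ hP
  have hji : j ∈ Finset.univ.erase i := by simp [hij.ne']
  rw [← Finset.add_sum_erase _ _ (Finset.mem_univ i), ← Finset.add_sum_erase _ _ hji,
    ← Finset.add_sum_erase _ (fun k => φ (a k - h k)) (Finset.mem_univ i),
    ← Finset.add_sum_erase _ (fun k => φ (a k - h k)) hji]
  have hrest : ∑ k ∈ (Finset.univ.erase i).erase j, φ (a k - (h ∘ Equiv.swap i j) k) =
      ∑ k ∈ (Finset.univ.erase i).erase j, φ (a k - h k) := by
    refine Finset.sum_congr rfl fun k hk => ?_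
    simp only [Finset.mem_erase, Finset.mem_univ, and_true] at hk
    simp [Equiv.swap_apply_of_ne_of_ne hk.2 hk.1]
  have hex := convex_exchange hφ (ha hij.le) hlt
  simp only [Function.comp_apply, Equiv.swap_apply_left, Equiv.swap_apply_right] at hrest ⊢
  rw [hrest]
  linarith

theorem sortDesc_antitone {n : ℕ} (g : Fin n → ℝ) : Antitone (sortDesc g) := fun _ _ hij =>
  Tuple.monotone_sort g (Fin.rev_le_rev.mpr hij)

/-- Sorting any rearrangement of an antitone tuple recovers the tuple. -/
theorem sortDesc_comp_perm {n : ℕ} {v : Fin n → ℝ} (hv : Antitone v)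
    (τ : Equiv.Perm (Fin n)) : sortDesc (v ∘ τ) = v := by
  have hmono : Monotone ((v ∘ τ) ∘ (Fin.revPerm.trans τ.symm)) := by
    intro i j hij
    simpa using hv (Fin.rev_le_rev.mpr hij)
  have h := Tuple.comp_sort_eq_comp_iff_monotone.mpr hmono
  funext i
  have := congrFun h (Fin.rev i)
  simpa [sortDesc] using this.symm

/-- Reduction to isotonic optimization, case `φ(x) = x`: if `v*` minimizes
`v ↦ R*(s − v) + ⟨w, v⟩` over the monotone cone, then `u* = v*_{σ⁻¹}` minimizes
`u ↦ R*(x − u) + f(u, w)` over `ℝⁿ`, with the same minimum value. Here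
`R*(z) = ∑ r*(zᵢ)`, `f(u, w) = ∑ wᵢ u_[i]`, `w` is sorted in descending order,
`σ` sorts `x` in descending order and `s = x_σ`. -/
theorem isotonic_reduction_id (n : ℕ) (hn : 1 ≤ n) (r rstar : ℝ → ℝ)
    (hr : ConvexOn ℝ Set.univ r)
    (hrstar : ∀ t : ℝ, IsLUB (Set.range fun s => s * t - r s) (rstar t))
    (w x : Fin n → ℝ) (hw : ∀ i j : Fin n, i ≤ j → w j ≤ w i)
    (σ : Equiv.Perm (Fin n)) (hσ : ∀ i j : Fin n, i ≤ j → x (σ j) ≤ x (σ i))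
    (s : Fin n → ℝ) (hs : ∀ i, s i = x (σ i))
    (vstar : Fin n → ℝ)
    (hvmono : ∀ i j : Fin n, i ≤ j → vstar j ≤ vstar i)
    (hvmin : ∀ v : Fin n → ℝ, (∀ i j : Fin n, i ≤ j → v j ≤ v i) →
      (∑ i, rstar (s i - vstar i)) + (∑ i, w i * vstar i) ≤
        (∑ i, rstar (s i - v i)) + (∑ i, w i * v i)) :
    (∀ u : Fin n → ℝ,
      (∑ i, rstar (x i - vstar (σ.symm i))) +
          (∑ i, w i * sortDesc (fun j => vstar (σ.symm j)) i) ≤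
        (∑ i, rstar (x i - u i)) + (∑ i, w i * sortDesc u i)) ∧
    (∑ i, rstar (x i - vstar (σ.symm i))) +
        (∑ i, w i * sortDesc (fun j => vstar (σ.symm j)) i) =
      (∑ i, rstar (s i - vstar i)) + (∑ i, w i * vstar i) := by
  have hφ := convexOn_conjugate hrstar
  have hval : (∑ i, rstar (x i - vstar (σ.symm i))) +
        (∑ i, w i * sortDesc (fun j => vstar (σ.symm j)) i) =
      (∑ i, rstar (s i - vstar i)) + (∑ i, w i * vstar i) := by
    have h1 : sortDesc (fun j => vstar (σ.symm j)) = vstar :=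
      sortDesc_comp_perm (fun i j hij => hvmono i j hij) σ.symm
    rw [h1, ← Equiv.sum_comp σ]
    simp [hs]
  refine ⟨fun u => ?_, hval⟩
  rw [hval]
  refine (hvmin (sortDesc u) fun i j hij => sortDesc_antitone u hij).trans ?_
  -- The exchange inequality is stated for increasing tuples, hence the order reversal here.
  have ha : Monotone fun i => s (Fin.rev i) := by
    intro i j hij
    simpa [hs] using hσ _ _ (Fin.rev_le_rev.mpr hij)
  have key := sum_convex_sub_sort_le hφ ha (u ∘ (Fin.revPerm.trans σ))
  rw [Tuple.comp_perm_comp_sort_eq_comp_sort] at key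
  have hL : ∑ i, rstar (s (Fin.rev i) - (u ∘ Tuple.sort u) i) =
      ∑ i, rstar (s i - sortDesc u i) := by
    rw [← Equiv.sum_comp Fin.revPerm]
    simp [sortDesc]
  have hR : ∑ i, rstar (s (Fin.rev i) - (u ∘ (Fin.revPerm.trans σ)) i) =
      ∑ i, rstar (x i - u i) := by
    rw [← Equiv.sum_comp (Fin.revPerm.trans σ) fun i => rstar (x i - u i)]
    simp [hs]
  rw [hL, hR] at key
  linarith
end

section
/- Let q > 1, let B be a finite nonempty index set, let (wᵢ)_{i∈B} be nonnegative real numbers, and for s ∈ ℝ^B define H(γ, s) := Σ_{i∈B} ( (1/q)|sᵢ − γ|^q + (wᵢ/2) γ² ). For each s, H(·, s) is strictly convex and coercive, so it has a unique minimizer γ*(s) ∈ ℝ. Let s̄ ∈ ℝ^B be such that γ*(s̄) ≠ s̄ⱼ for every j ∈ B. Then γ* is differentiable at s̄ and, for every i ∈ B, ∂γ*/∂sᵢ (s̄) = (q−1)|γ*(s̄) − s̄ᵢ|^{q−2} / Σ_{j∈B} ( (q−1)|γ*(s̄) − s̄ⱼ|^{q−2} + wⱼ ). -/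
/-!
Write `γ₀ = γ*(s̄)`. Each `H(·, s)` is convex and `H(γ, ·)` is continuous, so `γ*` is continuous at
`s̄`: the strict inequalities `H(γ₀, s) < H(γ₀ ± ε, s)` hold at `s̄`, hence for `s` near `s̄`, and by
convexity they confine the minimizer of `H(·, s)` to `(γ₀ - ε, γ₀ + ε)` (`continuousAt_argmin`).

Since `q > 1`, `H(·, s)` is differentiable everywhere, and `γ*(s)` is a zero of its derivative
`G(γ, s) = ∑ᵢ (|γ - sᵢ|^(q-2) (γ - sᵢ) + wᵢ γ)`. As `γ₀ ≠ s̄ⱼ` for all `j`, `G` is Fréchet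
differentiable at `(γ₀, s̄)`, and its `γ`-derivative there is positive. A root that is known to
depend continuously on a parameter can be differentiated with nothing more than Fréchet
differentiability at the single point (`hasFDerivAt_of_implicit`), which gives the formula.
-/

open Filter Topology Asymptotics

/-- Implicit differentiation of a root `g s` of `F (·, s)` already known to be continuous at `s₀`:
differentiability of `F` at the one point `(g s₀, s₀)` suffices. -/
lemma hasFDerivAt_of_implicit {E : Type*} [NormedAddCommGroup E] [NormedSpace ℝ E]
    (F : ℝ × E → ℝ) (g : E → ℝ) (s₀ : E) (D : ℝ) (hD : D ≠ 0) (A : E →L[ℝ] ℝ)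
    (hF : HasFDerivAt F (D • ContinuousLinearMap.fst ℝ ℝ E
      - A.comp (ContinuousLinearMap.snd ℝ ℝ E)) (g s₀, s₀))
    (hg : ContinuousAt g s₀) (h0 : ∀ s, F (g s, s) = 0) :
    HasFDerivAt g (D⁻¹ • A) s₀ := by
  have ht : Tendsto (fun s => (g s, s)) (𝓝 s₀) (𝓝 (g s₀, s₀)) := by
    rw [nhds_prod_eq]; exact hg.tendsto.prodMk tendsto_id
  have h1 := hF.isLittleO.comp_tendsto ht
  have h2 : (fun s => g s - g s₀ - (D⁻¹ • A) (s - s₀)) =o[𝓝 s₀]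
      fun s => ((g s - g s₀, s - s₀) : ℝ × E) := by
    refine (h1.const_mul_left (-D⁻¹)).congr ?_ ?_
    · intro s
      simp [h0]
      field_simp
      ring
    · intro s
      simp
  have h3 : (fun s => ((g s - g s₀ - (D⁻¹ • A) (s - s₀), 0) : ℝ × E)) =o[𝓝 s₀]
      fun s => ((g s - g s₀, s - s₀) : ℝ × E) := by
    refine IsBigO.trans_isLittleO ?_ h2
    refine IsBigO.of_bound 1 (Eventually.of_forall fun s => ?_)
    simp [Prod.norm_def]
  -- The error is negligible against the full increment, so that increment is bounded by `s - s₀`.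
  have h4 : (fun s => ((g s - g s₀, s - s₀) : ℝ × E)) =O[𝓝 s₀] fun s => s - s₀ := by
    refine h3.right_isBigO_sub.trans ?_
    have h5 := ((D⁻¹ • A).prod (ContinuousLinearMap.id ℝ E)).isBigO_comp
      (fun s => s - s₀) (𝓝 s₀)
    refine h5.congr_left fun s => ?_
    simp
  exact HasFDerivAt.of_isLittleO (h2.trans_isBigO h4)

/-- Strict minimizers of convex functions on `ℝ` depend continuously on a parameter. -/
lemma continuousAt_argmin {E : Type*} [TopologicalSpace E] (H : ℝ → E → ℝ) (g : E → ℝ) (s₀ : E)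
    (hc : ∀ γ, Continuous (H γ)) (hconv : ∀ s, ConvexOn ℝ Set.univ fun γ => H γ s)
    (hmin : ∀ s γ, γ ≠ g s → H (g s) s < H γ s) : ContinuousAt g s₀ := by
  rw [ContinuousAt, Metric.tendsto_nhds]
  intro ε hε
  have hp : ∀ᶠ s in 𝓝 s₀, H (g s₀) s < H (g s₀ + ε) s :=
    (hc _).continuousAt.eventually_lt (hc _).continuousAt (hmin _ _ (by linarith))
  have hm : ∀ᶠ s in 𝓝 s₀, H (g s₀) s < H (g s₀ - ε) s :=
    (hc _).continuousAt.eventually_lt (hc _).continuousAt (hmin _ _ (by linarith))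
  filter_upwards [hp, hm] with s h1 h2
  have h0 : H (g s) s ≤ H (g s₀) s := by
    by_cases h : g s₀ = g s
    · rw [h]
    · exact (hmin s _ h).le
  rw [Real.dist_eq, abs_lt]
  constructor
  · by_contra! h
    have := (hconv s).le_max_of_mem_Icc (x := g s) (y := g s₀) (z := g s₀ - ε)
      (Set.mem_univ _) (Set.mem_univ _) ⟨by linarith, by linarith⟩
    rw [max_eq_right h0] at this
    linarith
  · by_contra! h
    have := (hconv s).le_max_of_mem_Icc (x := g s₀) (y := g s) (z := g s₀ + ε)
      (Set.mem_univ _) (Set.mem_univ _) ⟨by linarith, by linarith⟩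
    rw [max_eq_left h0] at this
    linarith

lemma convexOn_abs_rpow {q : ℝ} (hq : 1 < q) :
    ConvexOn ℝ Set.univ fun x : ℝ => |x| ^ q := by
  refine ⟨convex_univ, fun x _ y _ a b ha hb hab => ?_⟩
  have h1 : |a • x + b • y| ≤ a • |x| + b • |y| := by
    simpa [abs_mul, abs_of_nonneg ha, abs_of_nonneg hb] using abs_add_le (a * x) (b * y)
  exact (Real.rpow_le_rpow (abs_nonneg _) h1 (by linarith)).trans
    ((convexOn_rpow hq.le).2 (abs_nonneg x) (abs_nonneg y) ha hb hab)

lemma hasDerivAt_abs_rpow_mul {q x : ℝ} (hx : x ≠ 0) :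
    HasDerivAt (fun y : ℝ => |y| ^ (q - 2) * y) ((q - 1) * |x| ^ (q - 2)) x := by
  have h1 := ((hasDerivAt_abs hx).rpow_const (p := q - 2)
    (Or.inl (abs_ne_zero.2 hx))).mul (hasDerivAt_id x)
  refine h1.congr_deriv ?_
  have h2 : |x| ^ (q - 2) = |x| ^ (q - 2 - 1) * |x| := by
    rw [Real.rpow_sub_one (abs_ne_zero.2 hx), div_mul_cancel₀ _ (abs_ne_zero.2 hx)]
  have h3 : (SignType.sign x : ℝ) * x = |x| := sign_mul_self x
  simp only [id, mul_one, h2]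
  linear_combination ((q - 2) * |x| ^ (q - 2 - 1)) * h3

open scoped BigOperators

/-- Differentiation of the PAV pooling subproblem, case `φ(x) = x²/2`:
with `H(γ, s) = ∑_{i ∈ B} ((1/q)|sᵢ − γ|^q + (wᵢ/2) γ²)` (`q > 1`, `wᵢ ≥ 0`) and `γ*(s)`
its unique minimizer in `γ`, if `γ*(s̄) ≠ s̄ⱼ` for all `j`, then `γ*` is differentiable at
`s̄` with `∂γ*/∂sᵢ = (q−1)|γ*(s̄) − s̄ᵢ|^{q−2} / ∑ⱼ ((q−1)|γ*(s̄) − s̄ⱼ|^{q−2} + wⱼ)`. -/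
theorem pav_subproblem_deriv_sq (q : ℝ) (hq : 1 < q)
    (B : Type*) [Fintype B] [Nonempty B] (w : B → ℝ) (hw : ∀ i, 0 ≤ w i)
    (H : ℝ → (B → ℝ) → ℝ)
    (hH : ∀ (γ : ℝ) (s : B → ℝ),
      H γ s = ∑ i, ((1 / q) * |s i - γ| ^ q + (w i / 2) * γ ^ 2))
    (gammaStar : (B → ℝ) → ℝ)
    (hmin : ∀ (s : B → ℝ) (γ : ℝ), γ ≠ gammaStar s → H (gammaStar s) s < H γ s)
    (sbar : B → ℝ) (hne : ∀ j : B, gammaStar sbar ≠ sbar j) :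
    HasFDerivAt gammaStar
      (∑ i : B, ((q - 1) * |gammaStar sbar - sbar i| ^ (q - 2) /
          ∑ j : B, ((q - 1) * |gammaStar sbar - sbar j| ^ (q - 2) + w j)) •
        (ContinuousLinearMap.proj i : (B → ℝ) →L[ℝ] ℝ)) sbar := by
  have hq0 : 0 < q := by linarith
  have hH' : ∀ (γ : ℝ) (s : B → ℝ),
      H γ s = ∑ i, ((1 / q) * |γ - s i| ^ q + (w i / 2) * γ ^ 2) := fun γ s => by
    simp only [hH, abs_sub_comm]
  have hcont : ContinuousAt gammaStar sbar := by
    refine continuousAt_argmin H gammaStar sbar (fun γ => ?_) (fun s => ?_) hmin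
    · have : H γ = fun s => ∑ i, ((1 / q) * |γ - s i| ^ q + (w i / 2) * γ ^ 2) :=
        funext (hH' γ)
      rw [this]
      refine continuous_finsetSum _ fun i _ => ?_
      exact (continuous_const.mul ((continuous_const.sub (continuous_apply i)).abs.rpow_const
        fun _ => Or.inr hq0.le)).add continuous_const
    · simp only [hH']
      have hsum : ∀ t : Finset B, ConvexOn ℝ Set.univ
          fun γ : ℝ => ∑ i ∈ t, ((1 / q) * |γ - s i| ^ q + (w i / 2) * γ ^ 2) := by
        intro t
        classical
        induction t using Finset.induction_on with
        | empty => simpa using convexOn_const (0 : ℝ) convex_univ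
        | insert i t hi ih =>
          simp only [Finset.sum_insert hi]
          refine ConvexOn.add (ConvexOn.add ?_ ?_) ih
          · have := ((convexOn_abs_rpow hq).translate_left (-s i)).smul
              (c := 1 / q) (by positivity)
            simpa [sub_eq_add_neg, Function.comp_def] using this
          · exact (even_two.convexOn_pow).smul (c := w i / 2) (by linarith [hw i])
      exact hsum Finset.univ
  set d : B → ℝ := fun j => (q - 1) * |gammaStar sbar - sbar j| ^ (q - 2) with hd
  have hdpos : ∀ j, 0 < d j := fun j =>
    mul_pos (by linarith) (Real.rpow_pos_of_pos (abs_pos.2 (sub_ne_zero.2 (hne j))) _)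
  have hDpos : 0 < ∑ j, (d j + w j) :=
    Finset.sum_pos (fun j _ => by linarith [hdpos j, hw j]) Finset.univ_nonempty
  have key := hasFDerivAt_of_implicit
    (fun p : ℝ × (B → ℝ) => ∑ i, (|p.1 - p.2 i| ^ (q - 2) * (p.1 - p.2 i) + w i * p.1))
    gammaStar sbar (∑ j, (d j + w j)) hDpos.ne'
    (∑ i, d i • (ContinuousLinearMap.proj i : (B → ℝ) →L[ℝ] ℝ)) ?_ hcont ?_
  · refine key.congr_fderiv ?_
    ext v
    simp [Finset.mul_sum, hd]
    refine Finset.sum_congr rfl fun i _ => ?_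
    ring
  · have hi : ∀ i ∈ (Finset.univ : Finset B), HasFDerivAt
        (fun p : ℝ × (B → ℝ) => |p.1 - p.2 i| ^ (q - 2) * (p.1 - p.2 i) + w i * p.1)
        (d i • (ContinuousLinearMap.fst ℝ ℝ (B → ℝ) -
          (ContinuousLinearMap.proj i : (B → ℝ) →L[ℝ] ℝ).comp
            (ContinuousLinearMap.snd ℝ ℝ (B → ℝ))) + w i • ContinuousLinearMap.fst ℝ ℝ (B → ℝ))
        (gammaStar sbar, sbar) := by
      intro i _
      have hl : HasFDerivAt (fun p : ℝ × (B → ℝ) => p.1 - p.2 i)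
          (ContinuousLinearMap.fst ℝ ℝ (B → ℝ) -
          (ContinuousLinearMap.proj i : (B → ℝ) →L[ℝ] ℝ).comp
            (ContinuousLinearMap.snd ℝ ℝ (B → ℝ))) (gammaStar sbar, sbar) :=
        (ContinuousLinearMap.fst ℝ ℝ (B → ℝ) -
          (ContinuousLinearMap.proj i : (B → ℝ) →L[ℝ] ℝ).comp
            (ContinuousLinearMap.snd ℝ ℝ (B → ℝ))).hasFDerivAt
      have h1 := (hasDerivAt_abs_rpow_mul (q := q) (sub_ne_zero.2 (hne i))).comp_hasFDerivAt
        (gammaStar sbar, sbar) hl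
      exact h1.add (hasFDerivAt_fst.const_mul (w i))
    refine (HasFDerivAt.fun_sum hi).congr_fderiv ?_
    ext v
    · simp [Finset.sum_add_distrib]
    · simp
  · intro s
    have hder : HasDerivAt (fun γ => H γ s) (∑ i, (|gammaStar s - s i| ^ (q - 2) *
        (gammaStar s - s i) + w i * gammaStar s)) (gammaStar s) := by
      simp only [hH']
      refine HasDerivAt.fun_sum fun i _ => ?_
      have h1 := (hasDerivAt_abs_rpow (gammaStar s - s i) hq).comp (gammaStar s)
        ((hasDerivAt_id (gammaStar s)).sub_const (s i))
      have h2 := (h1.const_mul (1 / q)).add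
        ((hasDerivAt_pow 2 (gammaStar s)).const_mul (w i / 2))
      refine h2.congr_deriv ?_
      field_simp
      simp
      ring
    refine IsLocalMin.hasDerivAt_eq_zero (Eventually.of_forall fun γ => ?_) hder
    by_cases h : γ = gammaStar s
    · rw [h]
    · exact (hmin s γ h).le
end
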